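/- arXiv:1406.7229 — 2 statements merged into one kernel-verified Lean document; each statement's English description precedes it below -/
import Mathlib

section
/- For every integer m ≥ 2 and every integer t ≥ 1 there exists a constant C = C(t,m), independent of N, such that for every integer N ≥ 1 and every f : G → ℂ, Σ_{x ∈ G} Σ_{k=0}^{⌊c_m·N⌋} (k+1)^{2t−1} · |Σ_{j=0}^{t} (−1)^j · C(t,j) · (σ_{k−j} * f)(x)|² ≤ C² · Σ_{x ∈ G} |f(x)|², where σ_{k−j} = 0 when k − j < 0 and C(t,j) is the binomial coefficient. -/
open Finset

noncomputable section

/-- Hamming weight on `(ℤ/(m+1)ℤ)^N`. -/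
def hw {m N : ℕ} (y : Fin N → ZMod (m + 1)) : ℕ :=
  (Finset.univ.filter fun i => y i ≠ 0).card

/-- `L¹`-normalized indicator of the sphere of radius `r` (zero if `r < 0` or `r > N`). -/
def sigmaC (m N : ℕ) (r : ℤ) : (Fin N → ZMod (m + 1)) → ℂ := fun x =>
  if (hw x : ℤ) = r then
    ((Finset.univ.filter fun y : Fin N → ZMod (m + 1) => (hw y : ℤ) = r).card : ℂ)⁻¹
  else 0

/-- Convolution on `(ℤ/(m+1)ℤ)^N`. -/
def convC {m N : ℕ} (g f : (Fin N → ZMod (m + 1)) → ℂ) : (Fin N → ZMod (m + 1)) → ℂ :=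
  fun x => ∑ y, g y * f (x - y)


open Polynomial in
def krA (l : ℝ) (r s k : ℕ) : ℝ := ((1 + C l * X) ^ r * (1 + X) ^ s : ℝ[X]).coeff k

def kra (l : ℝ) (r s k : ℕ) : ℝ := krA l r s k / ((r + s).choose k : ℝ)

open Polynomial in
lemma krA_zero (l : ℝ) (r s : ℕ) : krA l r s 0 = 1 := by
  simp [krA, coeff_zero_eq_eval_zero]

open Polynomial in
lemma krA_succ_zero (l : ℝ) (r s k : ℕ) :
    krA l (r + 1) s (k + 1) = krA l r s (k + 1) + l * krA l r s k := by
  have : ((1 + C l * X) ^ (r + 1) * (1 + X) ^ s : ℝ[X])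
      = (1 + C l * X) ^ r * (1 + X) ^ s + C l * (((1 + C l * X) ^ r * (1 + X) ^ s) * X) := by ring
  rw [krA, this, coeff_add, coeff_C_mul, coeff_mul_X]; rfl

open Polynomial in
lemma krA_zero_succ (l : ℝ) (r s k : ℕ) :
    krA l r (s + 1) (k + 1) = krA l r s (k + 1) + krA l r s k := by
  have : ((1 + C l * X) ^ r * (1 + X) ^ (s + 1) : ℝ[X])
      = (1 + C l * X) ^ r * (1 + X) ^ s + (((1 + C l * X) ^ r * (1 + X) ^ s) * X) := by ring
  rw [krA, this, coeff_add, coeff_mul_X]; rfl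

open Polynomial in
lemma krA_deriv (l : ℝ) (r s k : ℕ) :
    (k + 1 : ℝ) * krA l r s (k + 1) = r * l * krA l (r - 1) s k + s * krA l r (s - 1) k := by
  have h := coeff_derivative ((1 + C l * X) ^ r * (1 + X) ^ s : ℝ[X]) k
  have h2 : derivative ((1 + C l * X) ^ r * (1 + X) ^ s : ℝ[X])
      = C (r * l) * ((1 + C l * X) ^ (r - 1) * (1 + X) ^ s)
        + C (s : ℝ) * ((1 + C l * X) ^ r * (1 + X) ^ (s - 1)) := by
    simp [derivative_mul, derivative_pow]
    ring
  rw [h2, coeff_add, coeff_C_mul, coeff_C_mul] at h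
  unfold krA
  linarith

open Polynomial in
lemma krA_deriv2 (l : ℝ) (r s k : ℕ) :
    ((r : ℝ) + s - k) * krA l r s k = r * krA l (r - 1) s k + s * krA l r (s - 1) k := by
  cases k with
  | zero => simp [krA_zero]
  | succ k =>
    have h := krA_deriv l r s k
    have h1 : (r : ℝ) * krA l r s (k + 1)
        = r * (krA l (r - 1) s (k + 1) + l * krA l (r - 1) s k) := by
      cases r with
      | zero => simp
      | succ r => rw [krA_succ_zero]; simp
    have h2 : (s : ℝ) * krA l r s (k + 1)
        = s * (krA l r (s - 1) (k + 1) + krA l r (s - 1) k) := by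
      cases s with
      | zero => simp
      | succ s => rw [krA_zero_succ]; simp
    push_cast
    linarith

lemma krA_nonneg {l : ℝ} (hl : 0 ≤ l) (r s k : ℕ) : 0 ≤ krA l r s k := by
  induction k generalizing r s with
  | zero => simp [krA_zero]
  | succ k ih =>
    have h := krA_deriv l r s k
    have h1 := ih (r - 1) s
    have h2 := ih r (s - 1)
    have : 0 ≤ (k + 1 : ℝ) * krA l r s (k + 1) := by rw [h]; positivity
    exact nonneg_of_mul_nonneg_right this (by positivity)

lemma krA_abs {l : ℝ} (hl : 0 ≤ l) (r s k : ℕ) : |krA (-l) r s k| ≤ krA l r s k := by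
  induction k generalizing r s with
  | zero => simp [krA_zero]
  | succ k ih =>
    have h := krA_deriv l r s k
    have h' := krA_deriv (-l) r s k
    have h1 := ih (r - 1) s
    have h2 := ih r (s - 1)
    have hk : (0 : ℝ) < k + 1 := by positivity
    refine le_of_mul_le_mul_left ?_ hk
    rw [h, ← abs_of_pos hk, ← abs_mul, h']
    refine (abs_add_le _ _).trans ?_
    rw [abs_mul, abs_mul, abs_mul, abs_neg, abs_of_nonneg hl, Nat.abs_cast, Nat.abs_cast]
    gcongr

lemma krA_gt (l : ℝ) (r s k : ℕ) (hk : r + s < k) : krA l r s k = 0 := by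
  induction k generalizing r s with
  | zero => omega
  | succ k ih =>
    have h := krA_deriv l r s k
    have h1 : (r : ℝ) * l * krA l (r - 1) s k = 0 := by
      cases r with
      | zero => simp
      | succ r => rw [ih _ _ (by omega)]; simp
    have h2 : (s : ℝ) * krA l r (s - 1) k = 0 := by
      cases s with
      | zero => simp
      | succ s => rw [ih _ _ (by omega)]; simp
    rw [h1, h2, add_zero] at h
    rcases mul_eq_zero.1 h with h | h
    · exact absurd h (by positivity)
    · exact h

lemma kra_gt (l : ℝ) (r s k : ℕ) (hk : r + s < k) : kra l r s k = 0 := by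
  simp [kra, krA_gt l r s k hk]

lemma kra_zero (l : ℝ) (r s : ℕ) : kra l r s 0 = 1 := by
  simp [kra, krA_zero]

lemma kra_nonneg {l : ℝ} (hl : 0 ≤ l) (r s k : ℕ) : 0 ≤ kra l r s k :=
  div_nonneg (krA_nonneg hl r s k) (by positivity)

lemma kra_abs {l : ℝ} (hl : 0 ≤ l) (r s k : ℕ) : |kra (-l) r s k| ≤ kra l r s k := by
  unfold kra
  rw [abs_div, Nat.abs_cast]
  gcongr
  exact krA_abs hl r s k

/-- relation of the binomials -/
lemma choose_rel (N k : ℕ) (hk : k < N) :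
    (k + 1 : ℝ) * (N.choose (k + 1) : ℝ) = ((N : ℝ) - k) * (N.choose k : ℝ) := by
  have := Nat.choose_succ_right_eq N k
  have h2 : ((N - k : ℕ) : ℝ) = (N : ℝ) - k := by rw [Nat.cast_sub hk.le]
  rw [← h2]
  have : ((N.choose (k + 1) * (k + 1) : ℕ) : ℝ) = ((N.choose k * (N - k) : ℕ) : ℝ) := by rw [this]
  push_cast at this ⊢
  linarith

lemma choose_rel2 (N k : ℕ) (hk : k < N) :
    (N : ℝ) * ((N - 1).choose k : ℝ) = ((N : ℝ) - k) * (N.choose k : ℝ) := by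
  obtain ⟨n, rfl⟩ : ∃ n, N = n + 1 := ⟨N - 1, by omega⟩
  rw [← choose_rel _ _ hk]
  have := Nat.add_one_mul_choose_eq n k
  have : (((n + 1) * n.choose k : ℕ) : ℝ) = (((n + 1).choose (k + 1) * (k + 1) : ℕ) : ℝ) := by
    rw [this]
  push_cast at this ⊢
  linarith

lemma kra_diff (l : ℝ) (r s k : ℕ) (hk : k < r + s) :
    kra l r s (k + 1) - kra l r s k
      = (l - 1) * ((r : ℝ) / ((r + s : ℕ) : ℝ)) * kra l (r - 1) s k := by
  rcases Nat.eq_zero_or_pos r with rfl | hr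
  · have h1 := krA_deriv l 0 s k
    have h2 := krA_deriv2 l 0 s k
    have c1 := choose_rel (0 + s) k hk
    have p1 : (0 : ℝ) < ((0 + s).choose (k + 1) : ℝ) := by
      exact_mod_cast Nat.choose_pos (by omega)
    have p2 : (0 : ℝ) < ((0 + s).choose k : ℝ) := by exact_mod_cast Nat.choose_pos hk.le
    simp only [Nat.cast_zero, zero_div, mul_zero, zero_mul]
    rw [sub_eq_zero, kra, kra, div_eq_div_iff p1.ne' p2.ne']
    have hk1 : (0 : ℝ) < k + 1 := by positivity
    apply mul_left_cancel₀ hk1.ne'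
    push_cast at *
    simp only [zero_add, zero_mul] at *
    linear_combination (s.choose k : ℝ) * (h1 - h2) - krA l 0 s k * c1
  have h1 := krA_deriv l r s k
  have h2 := krA_deriv2 l r s k
  have c1 := choose_rel (r + s) k hk
  have c2 := choose_rel2 (r + s) k hk
  have e : r + s - 1 = r - 1 + s := by omega
  rw [e] at c2
  have p1 : (0 : ℝ) < ((r + s).choose (k + 1) : ℝ) := by
    exact_mod_cast Nat.choose_pos (by omega)
  have p2 : (0 : ℝ) < ((r + s).choose k : ℝ) := by exact_mod_cast Nat.choose_pos hk.le
  have p3 : (0 : ℝ) < ((r - 1 + s).choose k : ℝ) := by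
    exact_mod_cast Nat.choose_pos (by omega)
  have p4 : (0 : ℝ) < ((r + s : ℕ) : ℝ) := by exact_mod_cast (by omega)
  have hk1 : (0 : ℝ) < k + 1 := by positivity
  have hk2 : (0 : ℝ) < ((r + s : ℕ) : ℝ) - k := by
    have : (k : ℝ) < ((r + s : ℕ) : ℝ) := by exact_mod_cast hk
    linarith
  have e1 : kra l r s (k + 1)
      = (r * l * krA l (r - 1) s k + s * krA l r (s - 1) k) / ((k + 1) * ((r + s).choose (k + 1) : ℝ)) := by
    rw [← h1, kra, mul_div_mul_left _ _ hk1.ne']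
  have e2 : kra l r s k
      = (r * krA l (r - 1) s k + s * krA l r (s - 1) k) / ((((r + s : ℕ) : ℝ) - k) * ((r + s).choose k : ℝ)) := by
    rw [← h2, kra]
    push_cast at hk2 ⊢
    rw [mul_div_mul_left _ _ hk2.ne']
  rw [e1, e2, c1, ← c2, kra]
  field_simp
  ring

lemma kra_anti {l : ℝ} (hl : 0 ≤ l) (hl1 : l ≤ 1) (r s k : ℕ) :
    kra l r s (k + 1) ≤ kra l r s k := by
  by_cases hk : k < r + s
  · have := kra_diff l r s k hk
    have h2 : 0 ≤ (1 - l) * ((r : ℝ) / ((r + s : ℕ) : ℝ)) * kra l (r - 1) s k :=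
      mul_nonneg (mul_nonneg (by linarith) (by positivity)) (kra_nonneg hl _ _ _)
    linarith
  · rw [kra_gt l r s (k + 1) (by omega)]
    exact kra_nonneg hl _ _ _

lemma kra_le_one {l : ℝ} (hl : 0 ≤ l) (hl1 : l ≤ 1) (r s k : ℕ) : kra l r s k ≤ 1 := by
  induction k with
  | zero => simp [kra_zero]
  | succ k ih => exact (kra_anti hl hl1 r s k).trans ih

lemma kra_lower {l : ℝ} (hl : 0 ≤ l) (hl1 : l ≤ 1) (r s k : ℕ) (hk : k < r + s) :
    l * kra l r s k ≤ kra l r s (k + 1) := by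
  have h1 := krA_deriv l r s k
  have h2 := krA_deriv2 l r s k
  have c1 := choose_rel (r + s) k hk
  have p1 : (0 : ℝ) < ((r + s).choose (k + 1) : ℝ) := by
    exact_mod_cast Nat.choose_pos (by omega)
  have p2 : (0 : ℝ) < ((r + s).choose k : ℝ) := by exact_mod_cast Nat.choose_pos hk.le
  have hk1 : (0 : ℝ) < k + 1 := by positivity
  have hk2 : (0 : ℝ) < ((r + s : ℕ) : ℝ) - k := by
    have : (k : ℝ) < ((r + s : ℕ) : ℝ) := by exact_mod_cast hk
    linarith
  have e1 : kra l r s (k + 1)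
      = (r * l * krA l (r - 1) s k + s * krA l r (s - 1) k) / ((k + 1) * ((r + s).choose (k + 1) : ℝ)) := by
    rw [← h1, kra, mul_div_mul_left _ _ hk1.ne']
  have e2 : kra l r s k
      = (r * krA l (r - 1) s k + s * krA l r (s - 1) k) / ((((r + s : ℕ) : ℝ) - k) * ((r + s).choose k : ℝ)) := by
    rw [← h2, kra]
    push_cast at hk2 ⊢
    rw [mul_div_mul_left _ _ hk2.ne']
  rw [e1, e2, c1, ← mul_div_assoc]
  apply div_le_div_of_nonneg_right _ (by positivity)
  have q1 := krA_nonneg hl (r - 1) s k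
  have q2 := krA_nonneg hl r (s - 1) k
  have q3 : 0 ≤ (s : ℝ) * krA l r (s - 1) k := by positivity
  nlinarith

/-- averaging identity -/
lemma kra_avg (l : ℝ) (r s k : ℕ) (hk : k ≤ r + s) :
    ((r + 1 + s : ℕ) : ℝ) * kra l (r + 1) s (k + 1)
      = ((r + 1 + s : ℕ) - (k + 1 : ℝ)) * kra l r s (k + 1) + (k + 1) * (l * kra l r s k) := by
  have c1 := choose_rel2 (r + 1 + s)
  have e : r + 1 + s - 1 = r + s := by omega
  rw [e] at c1
  have p1 : (0 : ℝ) < ((r + 1 + s).choose (k + 1) : ℝ) := by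
    exact_mod_cast Nat.choose_pos (by omega)
  have p2 : (0 : ℝ) < ((r + s).choose k : ℝ) := by exact_mod_cast Nat.choose_pos hk
  have p5 : (0 : ℝ) < ((r + 1 + s : ℕ) : ℝ) := by exact_mod_cast (by omega)
  have c3 : ((r + 1 + s : ℕ) : ℝ) * ((r + s).choose k : ℝ)
      = (k + 1) * ((r + 1 + s).choose (k + 1) : ℝ) := by
    rw [choose_rel _ _ (by omega), c1 k (by omega)]
  have hk1 : (0 : ℝ) < k + 1 := by positivity
  have c3' : ((r + 1 + s).choose (k + 1) : ℝ)
      = ((r + 1 + s : ℕ) : ℝ) * ((r + s).choose k : ℝ) / (k + 1) := by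
    rw [c3]; field_simp
  rcases hk.lt_or_eq with h | h
  · have p3 : (0 : ℝ) < ((r + s).choose (k + 1) : ℝ) := by exact_mod_cast Nat.choose_pos h
    have c2 := c1 (k + 1) (by omega)
    have t1 : ((r + 1 + s : ℕ) - (k + 1 : ℝ)) * kra l r s (k + 1)
        = ((r + 1 + s : ℕ) : ℝ) * krA l r s (k + 1) / ((r + 1 + s).choose (k + 1) : ℝ) := by
      rw [kra, mul_div_assoc', div_eq_div_iff p3.ne' p1.ne']
      push_cast at c2 ⊢
      linear_combination (-krA l r s (k + 1)) * c2
    rw [t1, kra, krA_succ_zero, kra]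
    have t2 : (k + 1) * (l * (krA l r s k / ((r + s).choose k : ℝ)))
        = ((r + 1 + s : ℕ) : ℝ) * (l * krA l r s k) / ((r + 1 + s).choose (k + 1) : ℝ) := by
      rw [c3']; field_simp
    rw [t2]; ring
  · have t2 : (k + 1) * (l * (krA l r s k / ((r + s).choose k : ℝ)))
        = ((r + 1 + s : ℕ) : ℝ) * (l * krA l r s k) / ((r + 1 + s).choose (k + 1) : ℝ) := by
      rw [c3']; field_simp
    rw [kra_gt l r s (k + 1) (by omega), kra, krA_succ_zero, krA_gt l r s (k + 1) (by omega), kra, t2]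
    ring

lemma kra_mono_r {l : ℝ} (hl : 0 ≤ l) (hl1 : l ≤ 1) (r s k : ℕ) (hk : k ≤ r + s) :
    kra l (r + 1) s k ≤ kra l r s k := by
  cases k with
  | zero => simp [kra_zero]
  | succ k =>
    have h := kra_avg l r s k (by omega)
    have h2 := kra_lower hl hl1 r s k (by omega)
    have p5 : (0 : ℝ) < ((r + 1 + s : ℕ) : ℝ) := by exact_mod_cast (by omega)
    refine le_of_mul_le_mul_left ?_ p5
    rw [h]
    have hk1 : (0 : ℝ) < k + 1 := by positivity
    nlinarith

lemma kra_mono_r' {l : ℝ} (hl : 0 ≤ l) (hl1 : l ≤ 1) (r s k : ℕ) :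
    l * kra l r s k ≤ kra l (r + 1) s k := by
  by_cases hk : k ≤ r + s
  swap
  · rw [kra_gt l r s k (by omega), mul_zero]; exact kra_nonneg hl _ _ _
  cases k with
  | zero => simp [kra_zero, hl1]
  | succ k =>
    have h := kra_avg l r s k (by omega)
    have h2 := kra_anti hl hl1 r s k
    have h0 := kra_nonneg hl r s (k + 1)
    have p5 : (0 : ℝ) < ((r + 1 + s : ℕ) : ℝ) := by exact_mod_cast (by omega)
    refine le_of_mul_le_mul_left ?_ p5
    rw [h]
    have hk1 : (0 : ℝ) < k + 1 := by positivity
    have hk2 : (0 : ℝ) ≤ ((r + 1 + s : ℕ) : ℝ) - (k + 1) := by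
      have : ((k + 1 : ℕ) : ℝ) ≤ ((r + 1 + s : ℕ) : ℝ) := by exact_mod_cast (by omega)
      push_cast at this ⊢
      linarith
    have a1 := mul_le_mul_of_nonneg_left h2 (mul_nonneg hk1.le hl)
    have a2 : 0 ≤ (((r + 1 + s : ℕ) : ℝ) - (k + 1)) * ((1 - l) * kra l r s (k + 1)) :=
      mul_nonneg hk2 (mul_nonneg (by linarith) h0)
    nlinarith

lemma kra_mono_t {l : ℝ} (hl : 0 ≤ l) (hl1 : l ≤ 1) (t r s k : ℕ) :
    l ^ t * kra l r s k ≤ kra l (r + t) s k := by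
  induction t with
  | zero => simp
  | succ t ih =>
    refine le_trans ?_ (kra_mono_r' hl hl1 (r + t) s k)
    rw [pow_succ', mul_assoc]
    gcongr

lemma kra_decay {l : ℝ} (hl : 0 ≤ l) (hl1 : l ≤ 1) (r s k : ℕ) (hk : k ≤ r + s) :
    kra l r s k ≤ (1 - (1 - l) * ((r : ℝ) / ((r + s : ℕ) : ℝ))) ^ k := by
  have hrho : (r : ℝ) / ((r + s : ℕ) : ℝ) ≤ 1 := by
    apply div_le_one_of_le₀ _ (by positivity)
    push_cast; linarith [(Nat.cast_nonneg s : (0 : ℝ) ≤ s)]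
  have hrho0 : 0 ≤ (r : ℝ) / ((r + s : ℕ) : ℝ) := by positivity
  induction k with
  | zero => simp [kra_zero]
  | succ k ih =>
    have ih := ih (by omega)
    have h := kra_diff l r s k (by omega)
    have key : (r : ℝ) / ((r + s : ℕ) : ℝ) * kra l r s k
        ≤ (r : ℝ) / ((r + s : ℕ) : ℝ) * kra l (r - 1) s k := by
      cases r with
      | zero => simp
      | succ r =>
        apply mul_le_mul_of_nonneg_left _ hrho0
        exact kra_mono_r hl hl1 r s k (by omega)
    have : kra l r s (k + 1) ≤ (1 - (1 - l) * ((r : ℝ) / ((r + s : ℕ) : ℝ))) * kra l r s k := by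
      nlinarith
    refine this.trans ?_
    rw [pow_succ']
    apply mul_le_mul_of_nonneg_left ih
    nlinarith

lemma kra_iter (l : ℝ) (r s t k : ℕ) (hk : k + t ≤ r + s) :
    (fwdDiff 1)^[t] (kra l r s) k
      = (l - 1) ^ t * ((r.descFactorial t : ℝ) / ((r + s).descFactorial t : ℝ))
        * kra l (r - t) s k := by
  induction t generalizing k with
  | zero => simp
  | succ t ih =>
    rw [Function.iterate_succ_apply', fwdDiff, ih (k + 1) (by omega), ih k (by omega), ← mul_sub]
    rcases lt_or_ge r t with h | h
    · rw [Nat.descFactorial_of_lt h, Nat.descFactorial_of_lt (by omega : r < t + 1)]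
      simp
    · rw [kra_diff l (r - t) s k (by omega), Nat.descFactorial_succ, Nat.descFactorial_succ]
      have e1 : r - t + s = r + s - t := by omega
      have e2 : r - t - 1 = r - (t + 1) := by omega
      rw [e1, e2]
      push_cast
      rw [mul_div_mul_comm]
      ring

lemma desc_ratio (r s t : ℕ) (ht : t ≤ r + s) :
    ((r.descFactorial t : ℝ) / ((r + s).descFactorial t : ℝ))
      ≤ ((r : ℝ) / ((r + s : ℕ) : ℝ)) ^ t := by
  induction t with
  | zero => simp
  | succ t ih =>
    have ih := ih (by omega)
    rw [Nat.descFactorial_succ, Nat.descFactorial_succ]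
    push_cast
    rw [mul_div_mul_comm, pow_succ']
    push_cast at ih
    apply mul_le_mul _ ih (by positivity) (by positivity)
    have p1 : (0 : ℝ) < ((r + s - t : ℕ) : ℝ) := by exact_mod_cast (by omega)
    have p2 : (0 : ℝ) < (r : ℝ) + s := by exact_mod_cast (by omega)
    rw [div_le_div_iff₀ p1 p2]
    rcases lt_or_ge r t with h | h
    · rw [Nat.sub_eq_zero_of_le h.le]; simp; positivity
    · rw [Nat.cast_sub h, Nat.cast_sub (by omega)]
      push_cast
      nlinarith [mul_nonneg (Nat.cast_nonneg t : (0 : ℝ) ≤ t) (Nat.cast_nonneg s : (0 : ℝ) ≤ s)]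

def krD (l : ℝ) (t r s k : ℕ) : ℝ :=
  ∑ j ∈ range (t + 1), (-1 : ℝ) ^ j * (t.choose j : ℝ) * (if j ≤ k then kra l r s (k - j) else 0)

lemma krD_iter (l : ℝ) (r s t k : ℕ) : krD l t r s (k + t) = (fwdDiff 1)^[t] (kra l r s) k := by
  rw [fwdDiff_iter_eq_sum_shift, krD, ← Finset.sum_flip]
  refine Finset.sum_congr rfl fun j hj => ?_
  have hj : j ≤ t := by simpa [Nat.lt_succ_iff] using hj
  rw [if_pos (by omega), Nat.choose_symm hj, show k + t - (t - j) = k + j by omega]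
  simp

lemma krD_abs_le {l : ℝ} (hl : 0 ≤ l) (hl1 : l ≤ 1) (t r s k : ℕ) : |krD (-l) t r s k| ≤ 2 ^ t := by
  unfold krD
  refine (Finset.abs_sum_le_sum_abs _ _).trans ?_
  have : (2 : ℝ) ^ t = ∑ j ∈ range (t + 1), (t.choose j : ℝ) := by
    exact_mod_cast (Nat.sum_range_choose t).symm
  rw [this]
  refine Finset.sum_le_sum fun j _ => ?_
  rw [abs_mul, abs_mul, abs_pow, abs_neg, abs_one, one_pow, one_mul, Nat.abs_cast]
  apply mul_le_of_le_one_right (by positivity)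
  split_ifs
  · exact (kra_abs hl _ _ _).trans (kra_le_one hl hl1 _ _ _)
  · simp

lemma krD_decay {l : ℝ} (hl : 0 < l) (hl1 : l ≤ 1) (t r s k : ℕ) (hk : k + t ≤ r + s) :
    |krD (-l) t r s (k + t)| ≤ (2 / l) ^ t * ((r : ℝ) / ((r + s : ℕ) : ℝ)) ^ t
      * (1 - (1 - l) * ((r : ℝ) / ((r + s : ℕ) : ℝ))) ^ k := by
  rw [krD_iter, kra_iter _ _ _ _ _ hk]
  rcases lt_or_ge r t with h | h
  · rw [Nat.descFactorial_of_lt h]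
    simp only [Nat.cast_zero, zero_div, mul_zero, zero_mul, abs_zero]
    refine (abs_nonneg _).trans ((kra_abs hl.le r s k).trans
      (kra_decay hl.le hl1 r s k (by omega))) |> fun h3 => ?_
    exact mul_nonneg (by positivity) h3
  · have h1 := kra_decay hl.le hl1 r s k (by omega)
    have h2 := kra_mono_t hl.le hl1 t (r - t) s k
    rw [Nat.sub_add_cancel h] at h2
    have h3 := kra_abs hl.le (r - t) s k
    have h4 := desc_ratio r s t (by omega)
    rw [abs_mul, abs_mul, abs_pow, abs_of_nonneg (by positivity :
      0 ≤ ((r.descFactorial t : ℝ) / ((r + s).descFactorial t : ℝ)))]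
    have h5 : |(-l - 1)| ^ t ≤ 2 ^ t := by
      apply pow_le_pow_left₀ (abs_nonneg _)
      rw [abs_le]; constructor <;> linarith
    have h6 : |kra (-l) (r - t) s k| ≤ (1 / l) ^ t
        * (1 - (1 - l) * ((r : ℝ) / ((r + s : ℕ) : ℝ))) ^ k := by
      have h7 : l ^ t * |kra (-l) (r - t) s k| ≤ (1 - (1 - l) * ((r : ℝ) / ((r + s : ℕ) : ℝ))) ^ k :=
        (mul_le_mul_of_nonneg_left h3 (by positivity)).trans (h2.trans h1)
      rw [one_div, inv_pow, ← div_eq_inv_mul, le_div_iff₀ (by positivity)]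
      linarith
    calc _ ≤ 2 ^ t * ((r : ℝ) / ((r + s : ℕ) : ℝ)) ^ t * ((1 / l) ^ t
        * (1 - (1 - l) * ((r : ℝ) / ((r + s : ℕ) : ℝ))) ^ k) := by
          gcongr
      _ = _ := by rw [div_pow 2 l, one_div, inv_pow]; ring

lemma sum_pow_geom (n K : ℕ) (x : ℝ) (h0 : 0 ≤ x) (h1 : x < 1) :
    ∑ k ∈ range K, ((k : ℝ) + 1) ^ n * x ^ k ≤ n.factorial / (1 - x) ^ (n + 1) := by
  have hs := hasSum_choose_mul_geometric_of_norm_lt_one (𝕜 := ℝ) n (r := x)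
    (by rwa [Real.norm_of_nonneg h0])
  have h2 := sum_le_hasSum (range K) (fun i _ => by positivity) hs
  calc _ ≤ ∑ k ∈ range K, (n.factorial : ℝ) * (((k + n).choose n : ℝ) * x ^ k) := by
        refine Finset.sum_le_sum fun k _ => ?_
        rw [← mul_assoc]
        gcongr
        have : (k + 1) ^ n ≤ n.factorial * (k + n).choose n := by
          rw [← Nat.descFactorial_eq_factorial_mul_choose, Nat.add_descFactorial_eq_ascFactorial]
          exact Nat.pow_succ_le_ascFactorial _ _
        exact_mod_cast this
    _ ≤ _ := by
        rw [← Finset.mul_sum, div_eq_mul_one_div]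
        gcongr

lemma krD_sum {l : ℝ} (hl : 0 < l) (hl1 : l < 1) (t : ℕ) (ht : 1 ≤ t) :
    ∃ B : ℝ, 0 ≤ B ∧ ∀ r s K : ℕ, K ≤ r + s + 1 →
      ∑ k ∈ range K, ((k : ℝ) + 1) ^ (2 * t - 1) * (krD (-l) t r s k) ^ 2 ≤ B := by
  set n := 2 * t - 1 with hn
  have hn1 : n + 1 = 2 * t := by omega
  refine ⟨(∑ k ∈ range t, ((k : ℝ) + 1) ^ n * (2 ^ t) ^ 2)
    + ((t : ℝ) + 1) ^ n * ((2 / l) ^ t) ^ 2 * (n.factorial / (1 - l) ^ (2 * t)), ?_, ?_⟩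
  · have : 0 < 1 - l := by linarith
    positivity
  intro r s K hK
  have hmono : ∑ k ∈ range K, ((k : ℝ) + 1) ^ n * (krD (-l) t r s k) ^ 2
      ≤ (∑ k ∈ range t, ((k : ℝ) + 1) ^ n * (krD (-l) t r s k) ^ 2)
        + ∑ k ∈ range (K - t), (((t + k : ℕ) : ℝ) + 1) ^ n * (krD (-l) t r s (t + k)) ^ 2 := by
    rw [← Finset.sum_range_add (fun k : ℕ => ((k : ℝ) + 1) ^ n * (krD (-l) t r s k) ^ 2)]
    apply Finset.sum_le_sum_of_subset_of_nonneg
    · intro k; simp only [Finset.mem_range]; omega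
    · intros; positivity
  refine hmono.trans (add_le_add ?_ ?_)
  · refine Finset.sum_le_sum fun k _ => ?_
    apply mul_le_mul_of_nonneg_left _ (by positivity)
    rw [← sq_abs]
    exact pow_le_pow_left₀ (abs_nonneg _) (krD_abs_le hl.le hl1.le t r s k) 2
  · set ρ : ℝ := (r : ℝ) / ((r + s : ℕ) : ℝ) with hρ
    have hρ0 : 0 ≤ ρ := by positivity
    have hρ1 : ρ ≤ 1 := by
      apply div_le_one_of_le₀ _ (by positivity)
      push_cast; linarith [(Nat.cast_nonneg s : (0 : ℝ) ≤ s)]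
    have hc : 0 < 1 - l := by linarith
    have hx0 : 0 ≤ 1 - (1 - l) * ρ := by nlinarith
    have hx1 : 1 - (1 - l) * ρ ≤ 1 := by nlinarith
    have step : ∑ k ∈ range (K - t), (((t + k : ℕ) : ℝ) + 1) ^ n * (krD (-l) t r s (t + k)) ^ 2
        ≤ ∑ k ∈ range (K - t), ((t : ℝ) + 1) ^ n * ((2 / l) ^ t) ^ 2 * (ρ ^ t) ^ 2 *
            (((k : ℝ) + 1) ^ n * (1 - (1 - l) * ρ) ^ k) := by
      refine Finset.sum_le_sum fun k hk => ?_
      have hk := Finset.mem_range.1 hk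
      have d := krD_decay hl hl1.le t r s k (by omega)
      rw [← hρ] at d
      have d2 : (krD (-l) t r s (t + k)) ^ 2
          ≤ ((2 / l) ^ t) ^ 2 * (ρ ^ t) ^ 2 * (1 - (1 - l) * ρ) ^ k := by
        rw [add_comm t k, ← sq_abs]
        refine (pow_le_pow_left₀ (abs_nonneg _) d 2).trans ?_
        rw [mul_pow, mul_pow]
        apply mul_le_mul_of_nonneg_left _ (by positivity)
        have y0 : 0 ≤ (1 - (1 - l) * ρ) ^ k := by positivity
        have y1 : (1 - (1 - l) * ρ) ^ k ≤ 1 := pow_le_one₀ hx0 hx1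
        nlinarith
      have d3 : (((t + k : ℕ) : ℝ) + 1) ^ n ≤ ((t : ℝ) + 1) ^ n * ((k : ℝ) + 1) ^ n := by
        rw [← mul_pow]
        apply pow_le_pow_left₀ (by positivity)
        push_cast
        nlinarith [mul_nonneg (Nat.cast_nonneg t : (0 : ℝ) ≤ t) (Nat.cast_nonneg k : (0 : ℝ) ≤ k)]
      calc _ ≤ (((t : ℝ) + 1) ^ n * ((k : ℝ) + 1) ^ n) *
            (((2 / l) ^ t) ^ 2 * (ρ ^ t) ^ 2 * (1 - (1 - l) * ρ) ^ k) := by gcongr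
        _ = _ := by ring
    refine step.trans ?_
    rw [← Finset.mul_sum]
    rcases hρ0.eq_or_lt with h | h
    · rw [← h, zero_pow (by omega)]
      simp only [ne_eq, OfNat.ofNat_ne_zero, not_false_eq_true, zero_pow, mul_zero, zero_mul]
      positivity
    · have g := sum_pow_geom n (K - t) (1 - (1 - l) * ρ) hx0 (by nlinarith)
      have g2 : 1 - (1 - (1 - l) * ρ) = (1 - l) * ρ := by ring
      rw [g2, hn1] at g
      calc _ ≤ ((t : ℝ) + 1) ^ n * ((2 / l) ^ t) ^ 2 * (ρ ^ t) ^ 2 *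
            (n.factorial / ((1 - l) * ρ) ^ (2 * t)) := by gcongr
        _ = _ := by
          rw [mul_pow, ← pow_mul ρ, mul_comm t 2]
          field_simp

def chI {m N : ℕ} (ψ : AddChar (Fin N → ZMod (m + 1)) ℂ) (i : Fin N) : AddChar (ZMod (m + 1)) ℂ :=
  ψ.compAddMonoidHom (AddMonoidHom.single (fun _ : Fin N => ZMod (m + 1)) i)

open Classical in
def chR {m N : ℕ} (ψ : AddChar (Fin N → ZMod (m + 1)) ℂ) : ℕ :=
  (Finset.univ.filter fun i => chI ψ i ≠ 0).card

lemma chR_le {m N : ℕ} (ψ : AddChar (Fin N → ZMod (m + 1)) ℂ) : chR ψ ≤ N := by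
  unfold chR
  exact (Finset.card_le_univ _).trans (by simp)

lemma ch_prod {m N : ℕ} (ψ : AddChar (Fin N → ZMod (m + 1)) ℂ) (y : Fin N → ZMod (m + 1)) :
    ψ y = ∏ i, chI ψ i (y i) := by
  conv_lhs => rw [← Finset.univ_sum_single y]
  have h : ∀ S : Finset (Fin N), ψ (∑ i ∈ S, Pi.single i (y i)) = ∏ i ∈ S, chI ψ i (y i) := by
    classical
    intro S
    induction S using Finset.induction_on with
    | empty => simp
    | insert a S ha ih =>
      rw [Finset.sum_insert ha, Finset.prod_insert ha, AddChar.map_add_eq_mul, ih]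
      rfl
  exact h _

open Polynomial in
lemma ch_gen1 {m : ℕ} (φ : AddChar (ZMod (m + 1)) ℂ) [Decidable (φ = 0)] :
    ∑ a : ZMod (m + 1), C (φ (-a)) * (if a ≠ 0 then (X : ℂ[X]) else 1)
      = if φ = 0 then 1 + C (m : ℂ) * X else 1 - X := by
  have h : ∀ a : ZMod (m + 1), C (φ (-a)) * (if a ≠ 0 then (X : ℂ[X]) else 1)
      = C (φ (-a)) * X + (if a = 0 then 1 - X else 0) := by
    intro a
    by_cases h : a = 0
    · simp [h]
    · simp [h]
  have h2 : ∑ a : ZMod (m + 1), φ (-a) = ∑ a : ZMod (m + 1), φ a :=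
    Equiv.sum_comp (Equiv.neg _) φ
  rw [Finset.sum_congr rfl fun a _ => h a, Finset.sum_add_distrib, ← Finset.sum_mul,
    ← map_sum, h2, AddChar.sum_eq_ite]
  split_ifs with h
  · simp; ring
  · simp

open Polynomial in
lemma ch_gen {m N : ℕ} (ψ : AddChar (Fin N → ZMod (m + 1)) ℂ) :
    ∑ y, C (ψ (-y)) * (X : ℂ[X]) ^ hw y = (1 - X) ^ chR ψ * (1 + C (m : ℂ) * X) ^ (N - chR ψ) := by
  classical
  have h : ∀ y : Fin N → ZMod (m + 1), C (ψ (-y)) * (X : ℂ[X]) ^ hw y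
      = ∏ i, C (chI ψ i (-(y i))) * (if y i ≠ 0 then (X : ℂ[X]) else 1) := by
    intro y
    rw [Finset.prod_mul_distrib, ← map_prod, ch_prod, Finset.prod_ite]
    simp [hw]
  rw [Finset.sum_congr rfl fun y _ => h y, ← Fintype.prod_sum
    (fun i a => C (chI ψ i (-a)) * (if a ≠ 0 then (X : ℂ[X]) else 1)),
    Finset.prod_congr rfl fun i _ => ch_gen1 (chI ψ i), Finset.prod_ite, mul_comm,
    Finset.prod_const, Finset.prod_const]
  have hc := Finset.card_filter_add_card_filter_not (s := (Finset.univ : Finset (Fin N)))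
    (fun i => chI ψ i ≠ 0)
  simp only [not_not, Finset.card_univ, Fintype.card_fin] at hc
  have hR : chR ψ = (Finset.univ.filter fun i => chI ψ i ≠ 0).card := by
    unfold chR; congr
  have hR2 : N - chR ψ = (Finset.univ.filter fun i => chI ψ i = 0).card := by omega
  rw [hR2, hR]

open Polynomial in
lemma ch_sphere {m N : ℕ} (hm : m ≠ 0) (ψ : AddChar (Fin N → ZMod (m + 1)) ℂ) (k : ℕ) :
    ∑ y, (if hw y = k then ψ (-y) else 0)
      = ((krA (-(1 / m : ℝ)) (chR ψ) (N - chR ψ) k * (m : ℝ) ^ k : ℝ) : ℂ) := by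
  have h := congrArg (fun p => coeff p k) (ch_gen ψ)
  simp only [finsetSum_coeff, coeff_C_mul, coeff_X_pow] at h
  have hL : ∑ y, (if hw y = k then ψ (-y) else 0) = ∑ y, ψ (-y) * (if k = hw y then 1 else 0) := by
    refine Finset.sum_congr rfl fun y _ => ?_
    by_cases hy : hw y = k
    · simp [hy]
    · simp [hy, Ne.symm hy]
  rw [hL, h]
  have hP : ((1 - X) ^ chR ψ * (1 + C (m : ℂ) * X) ^ (N - chR ψ) : ℂ[X])
      = (((1 + C (-(1 / m : ℝ)) * X) ^ chR ψ * (1 + X) ^ (N - chR ψ) : ℝ[X]).comp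
          (C (m : ℝ) * X)).map Complex.ofRealHom := by
    have hm' : (m : ℂ) ≠ 0 := by exact_mod_cast hm
    have : (C (-(1 / m : ℂ)) * (C (m : ℂ) * X) : ℂ[X]) = -X := by
      rw [← mul_assoc, ← C_mul]
      have : -(1 / m : ℂ) * m = -1 := by field_simp
      rw [this]; simp
    simp only [mul_comp, pow_comp, add_comp, one_comp, C_comp, X_comp, Polynomial.map_mul,
      Polynomial.map_pow, Polynomial.map_add, Polynomial.map_one, Polynomial.map_X, map_C]
    have e1 : Complex.ofRealHom (-(1 / m : ℝ)) = -(1 / m : ℂ) := by simp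
    have e2 : Complex.ofRealHom (m : ℝ) = (m : ℂ) := by simp
    rw [e1, e2, this, sub_eq_add_neg]
  rw [hP, coeff_map, comp_C_mul_X_coeff]
  rfl

open Polynomial in
lemma sphere_card {m N : ℕ} (hm : m ≠ 0) (k : ℕ) :
    (((Finset.univ.filter fun y : Fin N → ZMod (m + 1) => hw y = k).card : ℕ) : ℂ)
      = (N.choose k : ℂ) * (m : ℂ) ^ k := by
  have h := ch_sphere hm (0 : AddChar (Fin N → ZMod (m + 1)) ℂ) k
  have h0 : chR (0 : AddChar (Fin N → ZMod (m + 1)) ℂ) = 0 := by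
    unfold chR
    rw [Finset.card_eq_zero, Finset.filter_eq_empty_iff]
    intro i _
    simp only [ne_eq, not_not]
    ext a
    simp [chI]
  rw [h0] at h
  simp only [krA, pow_zero, one_mul, Nat.sub_zero, coeff_one_add_X_pow] at h
  rw [Finset.card_filter]
  push_cast at h ⊢
  rw [← h]
  simp

lemma ch_mult {m N : ℕ} (hm : m ≠ 0) (ψ : AddChar (Fin N → ZMod (m + 1)) ℂ) (k : ℕ) :
    ∑ y, sigmaC m N (k : ℤ) y * ψ (-y)
      = ((kra (-(1 / m : ℝ)) (chR ψ) (N - chR ψ) k : ℝ) : ℂ) := by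
  have hs := ch_sphere hm ψ k
  have hc := sphere_card (N := N) hm k
  have e : ∀ y, sigmaC m N (k : ℤ) y * ψ (-y)
      = ((N.choose k : ℂ) * (m : ℂ) ^ k)⁻¹ * (if hw y = k then ψ (-y) else 0) := by
    intro y
    simp only [sigmaC, Nat.cast_inj]
    rw [hc]
    split_ifs <;> simp
  rw [Finset.sum_congr rfl fun y _ => e y, ← Finset.mul_sum, hs, kra,
    Nat.add_sub_cancel' (chR_le ψ)]
  have hm' : (m : ℂ) ^ k ≠ 0 := pow_ne_zero _ (by exact_mod_cast hm)
  push_cast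
  rw [mul_inv, div_eq_mul_inv]
  field_simp

lemma sigma_neg {m N : ℕ} (z : ℤ) (hz : z < 0) (y : Fin N → ZMod (m + 1)) : sigmaC m N z y = 0 := by
  unfold sigmaC
  rw [if_neg]
  omega

def opD (m N t k : ℕ) (f : (Fin N → ZMod (m + 1)) → ℂ) (x : Fin N → ZMod (m + 1)) : ℂ :=
  ∑ j ∈ Finset.range (t + 1),
    (-1 : ℂ) ^ j * (t.choose j : ℂ) * convC (sigmaC m N ((k : ℤ) - j)) f x

lemma conv_ch {m N : ℕ} (g : (Fin N → ZMod (m + 1)) → ℂ) (ψ : AddChar (Fin N → ZMod (m + 1)) ℂ)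
    (x : Fin N → ZMod (m + 1)) : convC g ψ x = (∑ y, g y * ψ (-y)) * ψ x := by
  unfold convC
  rw [Finset.sum_mul]
  refine Finset.sum_congr rfl fun y _ => ?_
  rw [sub_eq_add_neg, AddChar.map_add_eq_mul]
  ring

lemma opD_ch {m N : ℕ} (hm : m ≠ 0) (t k : ℕ) (ψ : AddChar (Fin N → ZMod (m + 1)) ℂ)
    (x : Fin N → ZMod (m + 1)) :
    opD m N t k ψ x = ((krD (-(1 / m : ℝ)) t (chR ψ) (N - chR ψ) k : ℝ) : ℂ) * ψ x := by
  unfold opD krD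
  push_cast
  rw [Finset.sum_mul]
  refine Finset.sum_congr rfl fun j _ => ?_
  rw [conv_ch]
  split_ifs with h
  · have : (k : ℤ) - j = ((k - j : ℕ) : ℤ) := by omega
    rw [this, ch_mult hm]
    ring
  · have : ∀ y, sigmaC m N ((k : ℤ) - j) y * ψ (-y) = 0 := fun y => by
      rw [sigma_neg _ (by omega), zero_mul]
    rw [Finset.sum_congr rfl fun y _ => this y]
    simp

lemma conv_sum {m N : ℕ} (g : (Fin N → ZMod (m + 1)) → ℂ) {ι : Type*} (S : Finset ι)
    (c : ι → ℂ) (F : ι → (Fin N → ZMod (m + 1)) → ℂ) (x : Fin N → ZMod (m + 1)) :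
    convC g (fun z => ∑ i ∈ S, c i * F i z) x = ∑ i ∈ S, c i * convC g (F i) x := by
  unfold convC
  simp only [Finset.mul_sum]
  rw [Finset.sum_comm]
  refine Finset.sum_congr rfl fun i _ => Finset.sum_congr rfl fun y _ => ?_
  ring

lemma opD_sum {m N : ℕ} (t k : ℕ) {ι : Type*} (S : Finset ι)
    (c : ι → ℂ) (F : ι → (Fin N → ZMod (m + 1)) → ℂ) (x : Fin N → ZMod (m + 1)) :
    opD m N t k (fun z => ∑ i ∈ S, c i * F i z) x = ∑ i ∈ S, c i * opD m N t k (F i) x := by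
  unfold opD
  simp only [conv_sum, Finset.mul_sum]
  rw [Finset.sum_comm]
  refine Finset.sum_congr rfl fun i _ => Finset.sum_congr rfl fun y _ => ?_
  ring

lemma plancherel {G : Type*} [AddCommGroup G] [Fintype G] (c : AddChar G ℂ → ℂ) :
    ∑ x, ‖∑ ψ : AddChar G ℂ, c ψ * ψ x‖ ^ 2 = Fintype.card G * ∑ ψ, ‖c ψ‖ ^ 2 := by
  classical
  have key : ∑ x, ((‖∑ ψ : AddChar G ℂ, c ψ * ψ x‖ ^ 2 : ℝ) : ℂ)
      = Fintype.card G * ∑ ψ, ((‖c ψ‖ ^ 2 : ℝ) : ℂ) := by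
    have h1 : ∀ x : G, ((‖∑ ψ : AddChar G ℂ, c ψ * ψ x‖ ^ 2 : ℝ) : ℂ)
        = ∑ ψ : AddChar G ℂ, ∑ φ : AddChar G ℂ, (c ψ * (starRingEnd ℂ) (c φ)) * ((ψ * φ⁻¹ : AddChar G ℂ) x) := by
      intro x
      rw [Complex.ofReal_pow, ← Complex.mul_conj', map_sum, Finset.sum_mul_sum]
      refine Finset.sum_congr rfl fun ψ _ => Finset.sum_congr rfl fun φ _ => ?_
      rw [map_mul, AddChar.mul_apply, AddChar.inv_apply', AddChar.inv_apply_eq_conj]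
      ring
    rw [Finset.sum_congr rfl fun x _ => h1 x, Finset.sum_comm, Finset.mul_sum]
    refine Finset.sum_congr rfl fun ψ _ => ?_
    rw [Finset.sum_comm]
    have h2 : ∀ φ : AddChar G ℂ, ∑ x, (c ψ * (starRingEnd ℂ) (c φ)) * ((ψ * φ⁻¹ : AddChar G ℂ) x)
        = if ψ = φ then (Fintype.card G : ℂ) * (c ψ * (starRingEnd ℂ) (c φ)) else 0 := by
      intro φ
      rw [← Finset.mul_sum, AddChar.sum_eq_ite]
      have : (ψ * φ⁻¹ = 0) ↔ ψ = φ := by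
        rw [← AddChar.one_eq_zero, mul_inv_eq_one]
      by_cases h : ψ = φ
      · rw [if_pos (this.2 h), if_pos h]; ring
      · rw [if_neg (fun h' => h (this.1 h')), if_neg h, mul_zero]
    rw [Finset.sum_congr rfl fun φ _ => h2 φ]
    simp only [Finset.sum_ite_eq, Finset.mem_univ, if_true]
    rw [Complex.mul_conj']
    push_cast
    rfl
  exact_mod_cast key

theorem statement12 (m : ℕ) (hm : 2 ≤ m) (t : ℕ) (ht : 1 ≤ t) :
    ∃ C : ℝ, ∀ N : ℕ, 1 ≤ N → ∀ f : (Fin N → ZMod (m + 1)) → ℂ,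
      ∑ x, ∑ k ∈ Finset.range ((m * N) / (m + 1) + 1),
          ((k : ℝ) + 1) ^ (2 * t - 1) *
            ‖∑ j ∈ Finset.range (t + 1),
                (-1 : ℂ) ^ j * (t.choose j : ℂ) * convC (sigmaC m N ((k : ℤ) - j)) f x‖ ^ 2 ≤
        C ^ 2 * ∑ x, ‖f x‖ ^ 2 := by
  have hm0 : m ≠ 0 := by omega
  have hm2 : (2 : ℝ) ≤ m := by exact_mod_cast hm
  have hl : (0 : ℝ) < 1 / m := by positivity
  have hl1 : (1 / m : ℝ) < 1 := by
    rw [div_lt_one (by linarith)]; linarith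
  obtain ⟨B, hB, hsum⟩ := krD_sum hl hl1 t ht
  refine ⟨Real.sqrt B, fun N _ f => ?_⟩
  rw [Real.sq_sqrt hB]
  set K := (m * N) / (m + 1) + 1 with hK
  have hKN : K ≤ N + 1 := by
    have : (m * N) / (m + 1) ≤ N := by
      apply Nat.div_le_of_le_mul
      nlinarith
    omega
  obtain ⟨c, hc⟩ : ∃ c : AddChar (Fin N → ZMod (m + 1)) ℂ → ℂ, f = fun x => ∑ ψ, c ψ * ψ x := by
    refine ⟨fun ψ => (AddChar.complexBasis (Fin N → ZMod (m + 1))).repr f ψ, ?_⟩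
    have h := (AddChar.complexBasis (Fin N → ZMod (m + 1))).sum_repr f
    funext x
    conv_lhs => rw [← h]
    simp [Finset.sum_apply]
  have hD : ∀ k x, opD m N t k f x
      = ∑ ψ, (c ψ * ((krD (-(1 / m : ℝ)) t (chR ψ) (N - chR ψ) k : ℝ) : ℂ)) * ψ x := by
    intro k x
    rw [hc, opD_sum t k Finset.univ c (fun ψ => (ψ : (Fin N → ZMod (m + 1)) → ℂ)) x]
    refine Finset.sum_congr rfl fun ψ _ => ?_
    rw [opD_ch hm0, mul_assoc]
  have hDsum : ∀ k, ∑ x, ‖opD m N t k f x‖ ^ 2 = Fintype.card (Fin N → ZMod (m + 1)) *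
      ∑ ψ, ‖c ψ‖ ^ 2 * (krD (-(1 / m : ℝ)) t (chR ψ) (N - chR ψ) k) ^ 2 := by
    intro k
    simp only [hD k]
    rw [plancherel]
    congr 1
    refine Finset.sum_congr rfl fun ψ _ => ?_
    rw [norm_mul, mul_pow, Complex.norm_real, Real.norm_eq_abs, sq_abs]
  have hf : ∑ x, ‖f x‖ ^ 2 = Fintype.card (Fin N → ZMod (m + 1)) * ∑ ψ, ‖c ψ‖ ^ 2 := by
    rw [← plancherel, hc]
  rw [Finset.sum_comm, hf]
  have hfin : ∀ k : ℕ, ∑ x, ((k : ℝ) + 1) ^ (2 * t - 1) *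
            ‖∑ j ∈ Finset.range (t + 1),
                (-1 : ℂ) ^ j * (t.choose j : ℂ) * convC (sigmaC m N ((k : ℤ) - j)) f x‖ ^ 2
      = ∑ ψ, (Fintype.card (Fin N → ZMod (m + 1)) : ℝ) * ‖c ψ‖ ^ 2 * (((k : ℝ) + 1) ^ (2 * t - 1) *
          (krD (-(1 / m : ℝ)) t (chR ψ) (N - chR ψ) k) ^ 2) := by
    intro k
    rw [← Finset.mul_sum]
    have := hDsum k
    unfold opD at this
    rw [this, Finset.mul_sum, Finset.mul_sum]
    refine Finset.sum_congr rfl fun ψ _ => ?_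
    ring
  rw [Finset.sum_congr rfl fun k _ => hfin k, Finset.sum_comm, Finset.mul_sum, Finset.mul_sum]
  refine Finset.sum_le_sum fun ψ _ => ?_
  rw [← Finset.mul_sum]
  have := hsum (chR ψ) (N - chR ψ) K (by have := chR_le ψ; omega)
  rw [mul_comm B]
  gcongr
end
end

section
/- There exists a constant C = C(m), independent of N, such that for every nonnegative function f : G → [0, ∞) and every x ∈ G, the smooth distant spherical maximal function satisfies M_S^D f(x) = max over integers 0 ≤ D ≤ N/(m+1) of (1/(D+1)) · Σ_{d=0}^{D} (σ_{N−d} * f)(x) ≤ C · max over integers 0 ≤ L ≤ c_m·N of (1/(L+1)) · Σ_{l=0}^{L} (σ_l * σ_N * f)(x). -/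
open Finset

noncomputable section

/-- `L¹`-normalized indicator of the sphere of radius `r` (zero if `r < 0` or `r > N`),
real-valued. -/
def sigmaR (m N : ℕ) (r : ℤ) : (Fin N → ZMod (m + 1)) → ℝ := fun x =>
  if (hw x : ℤ) = r then
    ((Finset.univ.filter fun y : Fin N → ZMod (m + 1) => (hw y : ℤ) = r).card : ℝ)⁻¹
  else 0

/-- Convolution of real-valued functions on `(ℤ/(m+1)ℤ)^N`. -/
def convR {m N : ℕ} (g f : (Fin N → ZMod (m + 1)) → ℝ) : (Fin N → ZMod (m + 1)) → ℝ :=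
  fun x => ∑ y, g y * f (x - y)

/-- expectation functional of the binomial distribution -/
def EB (p : ℝ) : ℕ → (ℕ → ℝ) → ℝ
  | 0, φ => φ 0
  | n + 1, φ => (1 - p) * EB p n φ + p * EB p n (fun k => φ (k + 1))

lemma EB_lin (p c d : ℝ) (n : ℕ) : ∀ φ ψ : ℕ → ℝ,
    EB p n (fun k => c * φ k + d * ψ k) = c * EB p n φ + d * EB p n ψ := by
  induction n with
  | zero => intro φ ψ; simp [EB]
  | succ n ih =>
    intro φ ψ
    simp only [EB]
    rw [ih φ ψ, ih (fun k => φ (k+1)) (fun k => ψ (k+1))]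
    ring

lemma EB_mono (p : ℝ) (hp : 0 ≤ p) (hp1 : p ≤ 1) (n : ℕ) : ∀ φ ψ : ℕ → ℝ, (∀ k, φ k ≤ ψ k) →
    EB p n φ ≤ EB p n ψ := by
  induction n with
  | zero => intro φ ψ h; simpa [EB] using h 0
  | succ n ih =>
    intro φ ψ h
    simp only [EB]
    have h1 := ih φ ψ h
    have h2 := ih (fun k => φ (k+1)) (fun k => ψ (k+1)) (fun k => h (k+1))
    have : 0 ≤ 1 - p := by linarith
    gcongr

lemma EB_zero (p : ℝ) (n : ℕ) : EB p n (fun _ => 0) = 0 := by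
  induction n with
  | zero => simp [EB]
  | succ n ih => simp [EB, ih]

lemma EB_point (p : ℝ) (n : ℕ) : ∀ j : ℕ,
    EB p n (fun k => if k = j then 1 else 0) = (n.choose j) * p ^ j * (1 - p) ^ (n - j) := by
  induction n with
  | zero =>
    intro j
    rcases j with _ | j <;> simp [EB]
  | succ n ih =>
    intro j
    simp only [EB]
    rw [ih]
    rcases j with _ | j
    · simp [EB_zero]; ring
    · have : (fun k : ℕ => if k + 1 = j + 1 then (1:ℝ) else 0) = fun k => if k = j then 1 else 0 := by
        funext k; simp
      rw [this, ih, Nat.choose_succ_succ]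
      rcases Nat.lt_or_ge n (j + 1) with h | h
      · rw [Nat.choose_eq_zero_of_lt h]
        simp
        ring
      · obtain ⟨r, rfl⟩ := Nat.exists_eq_add_of_le h
        have e1 : j + 1 + r - (j + 1) = r := by omega
        have e2 : j + 1 + r - j = r + 1 := by omega
        have e3 : j + 1 + r + 1 - (j + 1) = r + 1 := by omega
        rw [e1, e2, e3]
        push_cast
        ring

lemma EB_moment (p c1 c2 c4 : ℝ) (n : ℕ) : ∀ a : ℝ,
    EB p n (fun k => c1 * (k + a) + c2 * (k + a) ^ 2 + c4 * (k + a) ^ 4) =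
      c1 * (n * p + a) + c2 * ((n * p + a) ^ 2 + n * p * (1 - p)) +
      c4 * ((n * p + a) ^ 4 + 6 * (n * p + a) ^ 2 * (n * p * (1 - p)) +
        4 * (n * p + a) * (n * p * (1 - p) * (1 - 2 * p)) + 3 * (n * p * (1 - p)) ^ 2 +
        n * p * (1 - p) * (1 - 6 * p * (1 - p))) := by
  induction n with
  | zero => intro a; simp [EB]
  | succ n ih =>
    intro a
    simp only [EB]
    have : (fun k : ℕ => c1 * (((k + 1 : ℕ) : ℝ) + a) + c2 * (((k + 1 : ℕ) : ℝ) + a) ^ 2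
        + c4 * (((k + 1 : ℕ) : ℝ) + a) ^ 4) =
        fun k : ℕ => c1 * (k + (a + 1)) + c2 * (k + (a + 1)) ^ 2 + c4 * (k + (a + 1)) ^ 4 := by
      funext k; push_cast; ring
    rw [this, ih, ih]
    push_cast
    ring

lemma poly_ineq (t : ℝ) : 9 * t + 8 * t ^ 2 - t ^ 4 ≤ if 0 ≤ t then 50 else 0 := by
  split_ifs with h
  · nlinarith [sq_nonneg (t ^ 2 - 5), sq_nonneg (t - 2)]
  · push Not at h
    have : 0 ≤ 9 + 8 * t - t ^ 3 := by
      nlinarith [mul_nonneg (neg_nonneg.2 h.le) (sq_nonneg (t + 1.63)), sq_nonneg (t + 1.63)]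
    nlinarith

lemma tail_ge (m j : ℕ) (hm : 2 ≤ m) (hj : 1 ≤ j) :
    3 / 50 ≤ EB (1 / m) (m * j) (fun k => if j ≤ k then 1 else 0) := by
  have hm' : (2:ℝ) ≤ m := by exact_mod_cast hm
  have hj' : (1:ℝ) ≤ j := by exact_mod_cast hj
  set p : ℝ := 1 / m with hp
  have hp0 : 0 < p := by positivity
  have hp1 : p ≤ 1 / 2 := by
    rw [hp]; exact one_div_le_one_div_of_le (by norm_num) hm'
  have hnp : ((m * j : ℕ) : ℝ) * p = j := by
    rw [hp]; push_cast; field_simp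
  set v : ℝ := j * (1 - p) with hv
  have hv1 : 1 / 2 ≤ v := by rw [hv]; nlinarith
  set s : ℝ := Real.sqrt v with hs
  have hs0 : 0 < s := Real.sqrt_pos.2 (by linarith)
  have hs2 : s ^ 2 = v := Real.sq_sqrt (by linarith)
  have key := EB_moment p (9 / s) (8 / v) (-1 / v ^ 2) (m * j) (-j)
  rw [hnp, ← hv] at key
  have hmono := EB_mono p hp0.le (by linarith) (m * j)
    (fun k => 9 / s * ((k:ℝ) + -j) + 8 / v * ((k:ℝ) + -j) ^ 2 + -1 / v ^ 2 * ((k:ℝ) + -j) ^ 4)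
    (fun k => 50 * (if j ≤ k then 1 else 0) + 0 * 0) (by
      intro k
      have h := poly_ineq (((k:ℝ) - j) / s)
      have e : 9 / s * ((k:ℝ) + -j) + 8 / v * ((k:ℝ) + -j) ^ 2 + -1 / v ^ 2 * ((k:ℝ) + -j) ^ 4
        = 9 * (((k:ℝ) - j) / s) + 8 * (((k:ℝ) - j) / s) ^ 2 - (((k:ℝ) - j) / s) ^ 4 := by
        rw [← hs2]; field_simp; ring
      rw [e]
      refine h.trans (le_of_eq ?_)
      by_cases hk : j ≤ k
      · have : (j:ℝ) ≤ k := by exact_mod_cast hk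
        rw [if_pos hk, if_pos (div_nonneg (by linarith) hs0.le)]; norm_num
      · have : (k:ℝ) < j := by exact_mod_cast not_le.1 hk
        rw [if_neg hk, if_neg (not_le.2 (div_neg_of_neg_of_pos (by linarith) hs0))]; norm_num)
  rw [key, EB_lin p 50 0 (m * j) (fun k => if j ≤ k then 1 else 0) (fun _ => 0)] at hmono
  have hlow : 3 ≤ 9 / s * ((j:ℝ) + -j) + 8 / v * (((j:ℝ) + -j) ^ 2 + v) + -1 / v ^ 2 *
      (((j:ℝ) + -j) ^ 4 + 6 * ((j:ℝ) + -j) ^ 2 * v + 4 * ((j:ℝ) + -j) * (v * (1 - 2 * p)) +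
        3 * v ^ 2 + v * (1 - 6 * p * (1 - p))) := by
    have hv0 : 0 < v := by linarith
    have : 9 / s * ((j:ℝ) + -j) + 8 / v * (((j:ℝ) + -j) ^ 2 + v) + -1 / v ^ 2 *
      (((j:ℝ) + -j) ^ 4 + 6 * ((j:ℝ) + -j) ^ 2 * v + 4 * ((j:ℝ) + -j) * (v * (1 - 2 * p)) +
        3 * v ^ 2 + v * (1 - 6 * p * (1 - p))) = 5 - (1 - 6 * p * (1 - p)) / v := by
      field_simp; ring
    rw [this]
    have : (1 - 6 * p * (1 - p)) / v ≤ 2 := by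
      rw [div_le_iff₀ hv0]; nlinarith [mul_nonneg hp0.le (by linarith : 0 ≤ 1 - p)]
    linarith
  linarith

lemma EB_tail_succ (p : ℝ) (n j : ℕ) : EB p (n + 1) (fun k => if j + 1 ≤ k then 1 else 0) =
    EB p n (fun k => if j + 1 ≤ k then 1 else 0) + p * EB p n (fun k => if k = j then 1 else 0) := by
  simp only [EB]
  rw [← EB_lin, ← one_mul (EB p n fun k => if j + 1 ≤ k then 1 else 0), ← EB_lin]
  congr 1
  funext k
  split_ifs <;> first | omega | ring

lemma EB_sum (p : ℝ) (j L : ℕ) :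
    p * ∑ l ∈ Finset.range L, EB p l (fun k => if k = j then 1 else 0) =
      EB p L (fun k => if j + 1 ≤ k then 1 else 0) := by
  induction L with
  | zero => simp [EB]
  | succ L ih => rw [Finset.sum_range_succ, mul_add, ih, EB_tail_succ]

lemma EB_nonneg (p : ℝ) (hp : 0 ≤ p) (hp1 : p ≤ 1) (n : ℕ) (φ : ℕ → ℝ) (h : ∀ k, 0 ≤ φ k) :
    0 ≤ EB p n φ := by
  have := EB_mono p hp hp1 n (fun _ => 0) φ h
  rwa [EB_zero] at this

lemma sum_ge (m j D : ℕ) (hm : 2 ≤ m) (hj : j ≤ D) :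
    3 / 50 ≤ ∑ l ∈ Finset.range (m * D + 1),
      EB (1 / m) l (fun k => if k = j then 1 else 0) := by
  have hm' : (2:ℝ) ≤ m := by exact_mod_cast hm
  have hp0 : (0:ℝ) < 1 / m := by positivity
  have hp1 : (1:ℝ) / m ≤ 1 := by
    rw [div_le_one (by linarith)]; linarith
  have hnn : ∀ l, 0 ≤ EB (1 / m) l (fun k => if k = j then 1 else 0) := fun l =>
    EB_nonneg _ hp0.le hp1 _ _ (fun k => by split_ifs <;> norm_num)
  have hmj : m * j ≤ m * D := Nat.mul_le_mul_left m hj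
  have h1 : ∑ l ∈ Finset.range (m * j + 1), EB (1 / m) l (fun k => if k = j then 1 else 0) ≤
      ∑ l ∈ Finset.range (m * D + 1), EB (1 / m) l (fun k => if k = j then 1 else 0) := by
    apply Finset.sum_le_sum_of_subset_of_nonneg
    · exact Finset.range_mono (by omega)
    · intros; exact hnn _
  refine le_trans ?_ h1
  rcases Nat.eq_zero_or_pos j with rfl | hj0
  · simp [EB]; norm_num
  · refine (tail_ge m j hm hj0).trans ?_
    have h2 := EB_sum (1 / m) j (m * j + 1)
    rw [EB_tail_succ] at h2
    have h3 : EB (1 / m) (m * j) (fun k => if j ≤ k then 1 else 0) =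
      1 * EB (1 / m) (m * j) (fun k => if j + 1 ≤ k then 1 else 0) +
        1 * EB (1 / m) (m * j) (fun k => if k = j then 1 else 0) := by
      rw [← EB_lin]
      congr 1
      funext k
      split_ifs <;> first | omega | norm_num
    have h4 : 0 ≤ EB (1 / m) (m * j) (fun k => if j + 1 ≤ k then 1 else 0) :=
      EB_nonneg _ hp0.le hp1 _ _ (fun k => by split_ifs <;> norm_num)
    rw [h3]
    refine le_of_mul_le_mul_left ?_ hp0
    rw [h2]
    nlinarith

open Polynomial in
lemma X_pow_hw {m N : ℕ} (y : Fin N → ZMod (m + 1)) :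
    (X : ℝ[X]) ^ hw y = ∏ i, (if y i = 0 then 1 else X) := by
  unfold hw
  rw [Finset.prod_ite]
  simp

open Polynomial in
lemma sum_fac (m : ℕ) : (∑ a : ZMod (m + 1), if a = 0 then (1 : ℝ[X]) else X) = 1 + C (m:ℝ) * X := by
  rw [Finset.sum_ite]
  have : (Finset.univ.filter fun a : ZMod (m+1) => ¬ a = 0).card = m := by
    rw [Finset.filter_not, Finset.card_sdiff]
    simp [Finset.filter_eq']
  simp [this, Finset.filter_eq']

open Polynomial in
lemma card_sphere (m N r : ℕ) :
    ((Finset.univ.filter fun y : Fin N → ZMod (m + 1) => (hw y : ℤ) = (r : ℤ)).card : ℝ) =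
      N.choose r * (m : ℝ) ^ r := by
  have h : ∑ y : Fin N → ZMod (m + 1), (X : ℝ[X]) ^ hw y = (1 + C (m:ℝ) * X) ^ N := by
    simp_rw [X_pow_hw]
    rw [← Fintype.piFinset_univ, ← Finset.prod_univ_sum
      (fun _ => Finset.univ) (fun _ a => if a = 0 then (1 : ℝ[X]) else X)]
    simp [sum_fac]
  have h2 := congrArg (fun q => coeff q r) h
  simp only [finsetSum_coeff, coeff_X_pow] at h2
  have h3 : ((1 + C (m:ℝ) * X) ^ N).coeff r = N.choose r * (m : ℝ) ^ r := by
    have : (1 + C (m:ℝ) * X) ^ N = ((1 + X : ℝ[X]) ^ N).comp (C (m:ℝ) * X) := by simp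
    rw [this, comp_C_mul_X_coeff, coeff_one_add_X_pow]
  rw [h3] at h2
  rw [← h2]
  rw [Finset.card_filter]
  push_cast
  refine Finset.sum_congr rfl fun y _ => ?_
  congr 1
  simp only [Nat.cast_inj, eq_comm]

lemma hw_le {m N : ℕ} (y : Fin N → ZMod (m + 1)) : hw y ≤ N := by
  unfold hw
  exact (Finset.card_le_univ _).trans (by simp)

lemma hw_eq_iff {m N : ℕ} (y : Fin N → ZMod (m + 1)) : hw y = N ↔ ∀ i, y i ≠ 0 := by
  unfold hw
  have := Finset.card_filter_eq_iff (s := (Finset.univ : Finset (Fin N))) (p := fun i => y i ≠ 0)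
  simpa using this

open Polynomial in
lemma card_pair (m N l j : ℕ) (z : Fin N → ZMod (m + 1)) (hj : j + hw z = N) :
    ((Finset.univ.filter fun y : Fin N → ZMod (m + 1) => hw y = l ∧ hw (z - y) = N).card : ℝ) =
      if j ≤ l then (m:ℝ) ^ j * ((N - j).choose (l - j) * ((m : ℝ) - 1) ^ (l - j)) else 0 := by
  have h : ∑ y : Fin N → ZMod (m + 1), (if hw (z - y) = N then (X : ℝ[X]) ^ hw y else 0) =
      (C (m:ℝ) * X) ^ j * (1 + C ((m:ℝ) - 1) * X) ^ (N - j) := by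
    have e : ∀ y : Fin N → ZMod (m + 1), (if hw (z - y) = N then (X : ℝ[X]) ^ hw y else 0) =
        ∏ i, (if y i = z i then 0 else if y i = 0 then (1 : ℝ[X]) else X) := by
      intro y
      split_ifs with h
      · rw [hw_eq_iff] at h
        rw [X_pow_hw]
        refine Finset.prod_congr rfl fun i _ => ?_
        have hne : ¬ y i = z i := fun h' => h i (by simp [h'])
        rw [if_neg hne]
      · rw [hw_eq_iff] at h
        push Not at h
        obtain ⟨i, hi⟩ := h
        symm
        apply Finset.prod_eq_zero (Finset.mem_univ i)
        rw [if_pos]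
        exact (sub_eq_zero.1 hi).symm
    simp_rw [e]
    rw [← Fintype.piFinset_univ, ← Finset.prod_univ_sum
      (fun _ => Finset.univ) (fun i a => if a = z i then 0 else if a = 0 then (1 : ℝ[X]) else X)]
    have e2 : ∀ i, (∑ a : ZMod (m+1), if a = z i then 0 else if a = 0 then (1 : ℝ[X]) else X) =
        if z i ≠ 0 then (1 + C ((m:ℝ) - 1) * X) else C (m:ℝ) * X := by
      intro i
      have : (∑ a : ZMod (m+1), if a = z i then 0 else if a = 0 then (1 : ℝ[X]) else X) =
        (∑ a : ZMod (m+1), if a = 0 then (1 : ℝ[X]) else X) -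
         ∑ a : ZMod (m+1), if a = z i then (if a = 0 then (1 : ℝ[X]) else X) else 0 := by
        rw [← Finset.sum_sub_distrib]
        refine Finset.sum_congr rfl fun a _ => ?_
        split_ifs <;> simp
      rw [this, sum_fac, Finset.sum_ite_eq']
      simp only [Finset.mem_univ, if_true]
      by_cases hz : z i = 0
      · simp [hz]
      · simp [hz]; ring
    simp_rw [e2]
    rw [Finset.prod_ite, Finset.prod_const, Finset.prod_const]
    have c1 : (Finset.univ.filter fun i => z i ≠ 0).card = N - j := by
      have : hw z = N - j := by omega
      exact this
    have c2 : (Finset.univ.filter fun i => ¬ z i ≠ 0).card = j := by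
      have := Finset.card_filter_add_card_filter_not (s := (Finset.univ : Finset (Fin N))) (fun i => z i ≠ 0)
      rw [Finset.card_univ, Fintype.card_fin, c1] at this
      omega
    rw [c1, c2, mul_comm]
  have h2 := congrArg (fun q => coeff q l) h
  simp only [finsetSum_coeff] at h2
  have h3 : ((C (m:ℝ) * X) ^ j * (1 + C ((m:ℝ) - 1) * X) ^ (N - j)).coeff l =
      if j ≤ l then (m:ℝ) ^ j * ((N - j).choose (l - j) * ((m : ℝ) - 1) ^ (l - j)) else 0 := by
    have : (1 + C ((m:ℝ) - 1) * X) ^ (N - j) = ((1 + X : ℝ[X]) ^ (N - j)).comp (C ((m:ℝ) - 1) * X) := by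
      simp
    rw [mul_pow, mul_assoc, ← C_pow, coeff_C_mul, coeff_X_pow_mul', this]
    simp only [comp_C_mul_X_coeff, coeff_one_add_X_pow]
    split_ifs <;> simp
  rw [h3] at h2
  rw [← h2, Finset.card_filter]
  push_cast
  refine Finset.sum_congr rfl fun y _ => ?_
  by_cases h5 : hw (z - y) = N
  · simp only [h5, if_true, coeff_X_pow, and_true, eq_comm]
  · simp [h5]

lemma kernel_eq (m N l j : ℕ) (hm : 2 ≤ m) (hl : l ≤ N) (z : Fin N → ZMod (m + 1))
    (hj : j + hw z = N) :
    convR (sigmaR m N (l : ℤ)) (sigmaR m N (N : ℤ)) z =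
      EB (1 / m) l (fun k => if k = j then 1 else 0) * (N.choose j * (m : ℝ) ^ (N - j))⁻¹ := by
  have hm' : (2:ℝ) ≤ m := by exact_mod_cast hm
  have h : convR (sigmaR m N (l : ℤ)) (sigmaR m N (N : ℤ)) z =
      ((Finset.univ.filter fun y : Fin N → ZMod (m + 1) => hw y = l ∧ hw (z - y) = N).card : ℝ) *
      ((N.choose l * (m : ℝ) ^ l)⁻¹ * (N.choose N * (m : ℝ) ^ N)⁻¹) := by
    unfold convR sigmaR
    rw [card_sphere, card_sphere, Finset.card_filter]
    push_cast
    rw [Finset.sum_mul]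
    refine Finset.sum_congr rfl fun y _ => ?_
    simp only [Nat.cast_inj]
    split_ifs <;> simp_all
  rw [h, card_pair m N l j z hj, EB_point]
  split_ifs with hjl
  · have hc := Nat.choose_mul (n := N) hjl
    have hc' : (N.choose l : ℝ) * l.choose j = N.choose j * (N - j).choose (l - j) := by
      exact_mod_cast hc
    have p1 : (0:ℝ) < N.choose l := by exact_mod_cast Nat.choose_pos hl
    have p2 : (0:ℝ) < N.choose j := by exact_mod_cast Nat.choose_pos (hjl.trans hl)
    obtain ⟨r, rfl⟩ := Nat.exists_eq_add_of_le hjl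
    obtain ⟨s, rfl⟩ := Nat.exists_eq_add_of_le hl
    have e1 : j + r - j = r := by omega
    have e2 : j + r + s - j = r + s := by omega
    rw [e1, e2] at hc' ⊢
    have e3 : (1 - 1 / (m:ℝ)) = (m - 1) / m := by field_simp
    rw [e3, Nat.choose_self]
    simp only [div_pow, one_pow, pow_add]
    field_simp
    push_cast
    linear_combination (-((m:ℝ) - 1) ^ r) * hc'
  · rw [Nat.choose_eq_zero_of_lt (not_le.1 hjl)]
    simp

lemma conv_assoc' {m N : ℕ} (g h f : (Fin N → ZMod (m + 1)) → ℝ) (x : Fin N → ZMod (m + 1)) :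
    convR g (convR h f) x = ∑ z, convR g h z * f (x - z) := by
  unfold convR
  simp_rw [Finset.mul_sum, Finset.sum_mul]
  rw [Finset.sum_comm (s := Finset.univ) (t := Finset.univ)
    (f := fun z y => g y * h (z - y) * f (x - z))]
  refine Finset.sum_congr rfl fun y _ => ?_
  refine Fintype.sum_equiv (Equiv.addRight y) _ _ fun w => ?_
  simp only [Equiv.coe_addRight, add_sub_cancel_right]
  rw [mul_assoc, sub_sub, add_comm w y]

lemma sigma_sub (m N d j : ℕ) (hd : d ≤ N) (z : Fin N → ZMod (m + 1)) (hj : j + hw z = N) :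
    sigmaR m N ((N : ℤ) - d) z = if d = j then (N.choose j * (m : ℝ) ^ (N - j))⁻¹ else 0 := by
  have e : (N : ℤ) - d = ((N - d : ℕ) : ℤ) := by omega
  unfold sigmaR
  rw [e, card_sphere, Nat.choose_symm hd]
  by_cases h : d = j
  · subst h
    rw [if_pos rfl, if_pos (by omega)]
  · rw [if_neg h, if_neg (by omega)]

lemma kernel_le (m N D : ℕ) (hm : 2 ≤ m) (hD : m * D ≤ N) (z : Fin N → ZMod (m + 1)) :
    (1 / ((D : ℝ) + 1)) * ∑ d ∈ Finset.range (D + 1), sigmaR m N ((N : ℤ) - d) z ≤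
      17 * m * ((1 / (((m * D : ℕ) : ℝ) + 1)) * ∑ l ∈ Finset.range (m * D + 1),
        convR (sigmaR m N (l : ℤ)) (sigmaR m N (N : ℤ)) z) := by
  have hm' : (2:ℝ) ≤ m := by exact_mod_cast hm
  have hDN : D ≤ N := by nlinarith
  obtain ⟨j, hj⟩ : ∃ j, j + hw z = N := ⟨N - hw z, by have := hw_le z; omega⟩
  have h1 : ∑ d ∈ Finset.range (D + 1), sigmaR m N ((N : ℤ) - d) z =
      if j ∈ Finset.range (D + 1) then (N.choose j * (m : ℝ) ^ (N - j))⁻¹ else 0 := by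
    rw [← Finset.sum_ite_eq' (Finset.range (D + 1)) j (fun _ => (N.choose j * (m : ℝ) ^ (N - j))⁻¹)]
    refine Finset.sum_congr rfl fun d hd => ?_
    rw [Finset.mem_range] at hd
    exact sigma_sub m N d j (by omega) z hj
  have h2 : ∑ l ∈ Finset.range (m * D + 1), convR (sigmaR m N (l : ℤ)) (sigmaR m N (N : ℤ)) z =
      (∑ l ∈ Finset.range (m * D + 1), EB (1 / m) l (fun k => if k = j then 1 else 0)) *
        (N.choose j * (m : ℝ) ^ (N - j))⁻¹ := by
    rw [Finset.sum_mul]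
    refine Finset.sum_congr rfl fun l hl => ?_
    rw [Finset.mem_range] at hl
    exact kernel_eq m N l j hm (by omega) z hj
  rw [h1, h2]
  have hS : 0 ≤ (N.choose j * (m : ℝ) ^ (N - j))⁻¹ := by positivity
  have hp1 : (1:ℝ) / m ≤ 1 := by
    rw [div_le_one (by linarith)]; linarith
  split_ifs with h
  · rw [Finset.mem_range] at h
    have h3 := sum_ge m j D hm (by omega)
    set W := ∑ l ∈ Finset.range (m * D + 1), EB (1 / m) l (fun k => if k = j then 1 else 0)
    set S := (N.choose j * (m : ℝ) ^ (N - j))⁻¹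
    have h4 : 1 / ((D:ℝ) + 1) ≤ 17 * m * (1 / (((m * D : ℕ) : ℝ) + 1) * W) := by
      have : 17 * m * (1 / (((m * D : ℕ) : ℝ) + 1) * W) = (17 * m * W) / (m * D + 1) := by
        push_cast; field_simp
      rw [this, div_le_div_iff₀ (by positivity) (by positivity)]
      have hD0 : (0:ℝ) ≤ D := by positivity
      have h5 : 1 ≤ 17 * W := by linarith
      have h6 : (m:ℝ) * D + 1 ≤ m * (D + 1) := by nlinarith
      nlinarith [mul_nonneg (sub_nonneg.2 h5) (by positivity : 0 ≤ (m:ℝ) * (D + 1))]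
    calc 1 / ((D:ℝ) + 1) * S ≤ 17 * m * (1 / (((m * D : ℕ) : ℝ) + 1) * W) * S :=
          mul_le_mul_of_nonneg_right h4 hS
      _ = _ := by ring
  · have h3 : 0 ≤ ∑ l ∈ Finset.range (m * D + 1), EB (1 / m) l (fun k => if k = j then 1 else 0) :=
      Finset.sum_nonneg fun l _ => EB_nonneg _ (by positivity) hp1 _ _
        (fun k => by split_ifs <;> norm_num)
    rw [mul_zero]
    positivity

theorem statement15 (m : ℕ) (hm : 2 ≤ m) :
    ∃ C : ℝ, ∀ N : ℕ, 1 ≤ N → ∀ f : (Fin N → ZMod (m + 1)) → ℝ, (∀ x, 0 ≤ f x) → ∀ x,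
      -- the smooth distant spherical maximal function
      ((Finset.range (N / (m + 1) + 1)).sup' Finset.nonempty_range_add_one fun D =>
          (1 / ((D : ℝ) + 1)) *
            ∑ d ∈ Finset.range (D + 1), convR (sigmaR m N ((N : ℤ) - d)) f x) ≤
      C * ((Finset.range ((m * N) / (m + 1) + 1)).sup' Finset.nonempty_range_add_one fun L =>
          (1 / ((L : ℝ) + 1)) *
            ∑ l ∈ Finset.range (L + 1),
              convR (sigmaR m N (l : ℤ)) (convR (sigmaR m N (N : ℤ)) f) x) := by
  refine ⟨17 * m, fun N hN f hf x => ?_⟩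
  apply Finset.sup'_le
  intro D hD
  rw [Finset.mem_range] at hD
  have hD1 : (m + 1) * D ≤ N := by
    have := Nat.div_mul_le_self N (m + 1)
    nlinarith [Nat.lt_succ_iff.1 hD]
  have hmD : m * D ≤ N := by nlinarith
  have hL : m * D ∈ Finset.range ((m * N) / (m + 1) + 1) := by
    rw [Finset.mem_range, Nat.lt_succ_iff, Nat.le_div_iff_mul_le (by omega)]
    calc m * D * (m + 1) = m * ((m + 1) * D) := by ring
      _ ≤ m * N := Nat.mul_le_mul_left m hD1
  refine le_trans ?_ (mul_le_mul_of_nonneg_left (Finset.le_sup' (fun L : ℕ =>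
          (1 / ((L : ℝ) + 1)) *
            ∑ l ∈ Finset.range (L + 1),
              convR (sigmaR m N (l : ℤ)) (convR (sigmaR m N (N : ℤ)) f) x) hL) (by positivity))
  simp only [conv_assoc']
  have e1 : ∑ d ∈ Finset.range (D + 1), convR (sigmaR m N ((N : ℤ) - d)) f x =
      ∑ z, (∑ d ∈ Finset.range (D + 1), sigmaR m N ((N : ℤ) - d) z) * f (x - z) := by
    simp only [convR, Finset.sum_mul]
    exact Finset.sum_comm
  rw [e1, Finset.sum_comm, Finset.mul_sum, Finset.mul_sum, Finset.mul_sum]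
  refine Finset.sum_le_sum fun z _ => ?_
  rw [← Finset.sum_mul, ← mul_assoc, ← mul_assoc, ← mul_assoc]
  refine mul_le_mul_of_nonneg_right ?_ (hf _)
  rw [mul_assoc (17 * (m:ℝ))]
  exact kernel_le m N D hm hmD z
end
end
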